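/- Let J be an L-Lipschitz-smooth function on a real finite-dimensional inner product space, let θ be a random vector measurable with respect to a σ-algebra F, let g be a random vector with E[g | F] = w ∇J(θ) for an F-measurable random weight w satisfying 0 < w̲ ≤ w ≤ w̄, and suppose E[‖g‖² | F] ≤ w̄ σ². Then for any step size α > 0, the updated point θ' = θ + α g satisfies E[J(θ')] ≥ E[J(θ)] + α w̲ E[‖∇J(θ)‖²] − (L α² / 2) w̄ σ². -/

import Mathlib

/-!
Lipschitz smoothness gives the pointwise quadratic lower bound
`J (x + v) ≥ J x + ⟪∇J x, v⟫ - (L / 2) ‖v‖ ^ 2` (`quadratic_lower_bound`). Take `x = θ`,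
`v = α g` and integrate. Since `∇J(θ)` is `F`-measurable, it can be pulled out of the conditional
expectation, so `E⟪∇J(θ), g⟫ = E⟪∇J(θ), E[g | F]⟫ = E[w ‖∇J(θ)‖²] ≥ w̲ E‖∇J(θ)‖²`
(`integral_inner_eq_integral_inner_condExp`), while the tower property turns the bound on
`E[‖g‖² | F]` into `E‖g‖² ≤ w̄ σ²`.
-/

open MeasureTheory

/-- Along the segment `t ↦ x + t • v`, the derivative of `J` is at least
`⟪∇J x, v⟫ - L t ‖v‖ ^ 2`; comparing antiderivatives on `[0, 1]` gives the bound. -/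
theorem quadratic_lower_bound
    {E : Type*} [NormedAddCommGroup E] [InnerProductSpace ℝ E] [CompleteSpace E]
    {J : E → ℝ} {L : ℝ} (hJdiff : Differentiable ℝ J)
    (hJsmooth : ∀ x y : E, ‖gradient J x - gradient J y‖ ≤ L * ‖x - y‖) (x v : E) :
    J x + inner ℝ (gradient J x) v - L / 2 * ‖v‖ ^ 2 ≤ J (x + v) := by
  have hB : ∀ t : ℝ, HasDerivAt (fun t : ℝ => J (x + t • v))
      (inner ℝ (gradient J (x + t • v)) v) t := by
    intro t
    have h1 : HasDerivAt (fun t : ℝ => x + t • v) v t := by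
      simpa using ((hasDerivAt_id t).smul_const v).const_add x
    have h2 := (hJdiff (x + t • v)).hasGradientAt.hasFDerivAt.comp_hasDerivAt t h1
    simpa [Function.comp_def] using h2
  have hf : ∀ t : ℝ, HasDerivAt
      (fun t : ℝ => J x + t * inner ℝ (gradient J x) v - L / 2 * ‖v‖ ^ 2 * t ^ 2)
      (inner ℝ (gradient J x) v - L * t * ‖v‖ ^ 2) t := by
    intro t
    have h := (((hasDerivAt_id t).mul_const (inner ℝ (gradient J x) v)).const_add (J x)).sub
      ((hasDerivAt_pow 2 t).const_mul (L / 2 * ‖v‖ ^ 2))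
    refine h.congr_deriv ?_
    norm_num
    ring
  have key := image_le_of_deriv_right_le_deriv_boundary (a := 0) (b := 1)
    (fun t _ => (hf t).continuousAt.continuousWithinAt) (fun t _ => (hf t).hasDerivWithinAt)
    (by simp) (fun t _ => (hB t).continuousAt.continuousWithinAt)
    (fun t _ => (hB t).hasDerivWithinAt) ?_ (Set.right_mem_Icc.2 zero_le_one)
  · simpa using key
  · intro t ht
    have h1 : inner ℝ (gradient J x - gradient J (x + t • v)) v ≤ L * t * ‖v‖ ^ 2 := by
      calc inner ℝ (gradient J x - gradient J (x + t • v)) v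
          ≤ ‖gradient J x - gradient J (x + t • v)‖ * ‖v‖ := real_inner_le_norm _ _
        _ ≤ (L * ‖x - (x + t • v)‖) * ‖v‖ := by gcongr; exact hJsmooth _ _
        _ = L * t * ‖v‖ ^ 2 := by
          rw [sub_add_cancel_left, norm_neg, norm_smul, Real.norm_of_nonneg ht.1]; ring
    rw [inner_sub_left] at h1
    linarith

theorem integral_inner_eq_integral_inner_condExp
    {E : Type*} [NormedAddCommGroup E] [InnerProductSpace ℝ E] [CompleteSpace E]
    {Ω : Type*} {F mΩ : MeasurableSpace Ω} {μ : Measure Ω} [IsFiniteMeasure μ] (hF : F ≤ mΩ)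
    {f g : Ω → E} (hf : StronglyMeasurable[F] f) (hg : Integrable g μ)
    (hfg : Integrable (fun ω => inner ℝ (f ω) (g ω)) μ) :
    ∫ ω, inner ℝ (f ω) (g ω) ∂μ = ∫ ω, inner ℝ (f ω) ((μ[g | F]) ω) ∂μ := by
  rw [← integral_condExp hF]
  exact integral_congr_ae (condExp_bilin_of_stronglyMeasurable_left (innerSL ℝ) hf hfg hg)

/-- One step of stochastic gradient ascent with a bounded random importance weight:
if `J` is `L`-Lipschitz-smooth, `θ` is `F`-measurable, `E[g | F] = w • ∇J(θ)` with
`F`-measurable `w ∈ [w̲, w̄]`, and `E[‖g‖² | F] ≤ w̄ σ²`, then the update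
`θ' = θ + α • g` satisfies
`E[J(θ')] ≥ E[J(θ)] + α w̲ E[‖∇J(θ)‖²] − (L α²/2) w̄ σ²`. -/
theorem expected_ascent_step
    (E : Type*) [NormedAddCommGroup E] [InnerProductSpace ℝ E] [FiniteDimensional ℝ E]
    (Ω : Type*) [mΩ : MeasurableSpace Ω] (μ : Measure Ω) [IsProbabilityMeasure μ]
    (J : E → ℝ) (L σ wlow whigh : ℝ)
    (hL : 0 < L) (hσ : 0 < σ) (hwlow : 0 < wlow) (hw : wlow ≤ whigh)
    (hJdiff : Differentiable ℝ J)
    (hJsmooth : ∀ x y : E, ‖gradient J x - gradient J y‖ ≤ L * ‖x - y‖)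
    (F : MeasurableSpace Ω) (hF : F ≤ mΩ)
    (θ g : Ω → E) (w : Ω → ℝ)
    (hθmeas : StronglyMeasurable[F] θ)
    (hwmeas : Measurable[F] w)
    (hwbound : ∀ ω, wlow ≤ w ω ∧ w ω ≤ whigh)
    (hgint : Integrable g μ)
    (hgsqint : Integrable (fun ω => ‖g ω‖ ^ 2) μ)
    (hcond : μ[g | F] =ᵐ[μ] fun ω => w ω • gradient J (θ ω))
    (hcondsq : ∀ᵐ ω ∂μ, (μ[fun ω' => ‖g ω'‖ ^ 2 | F]) ω ≤ whigh * σ ^ 2)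
    (α : ℝ) (hα : 0 < α)
    (hJθint : Integrable (fun ω => J (θ ω)) μ)
    (hJθ'int : Integrable (fun ω => J (θ ω + α • g ω)) μ)
    (hgradsqint : Integrable (fun ω => ‖gradient J (θ ω)‖ ^ 2) μ) :
    (∫ ω, J (θ ω + α • g ω) ∂μ) ≥
      (∫ ω, J (θ ω) ∂μ) + α * wlow * (∫ ω, ‖gradient J (θ ω)‖ ^ 2 ∂μ)
        - (L * α ^ 2 / 2) * whigh * σ ^ 2 := by
  have hgradcont : Continuous (gradient J) :=
    (LipschitzWith.of_dist_le_mul (K := ⟨L, hL.le⟩) fun x y => by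
      rw [dist_eq_norm, dist_eq_norm]
      exact hJsmooth x y).continuous
  have hGmeas : StronglyMeasurable[F] (fun ω => gradient J (θ ω)) :=
    hgradcont.comp_stronglyMeasurable hθmeas
  have hGaesm : AEStronglyMeasurable[mΩ] (fun ω => gradient J (θ ω)) μ :=
    (hGmeas.mono hF).aestronglyMeasurable
  have hinner : Integrable (fun ω => inner ℝ (gradient J (θ ω)) (g ω)) μ := by
    refine (hgradsqint.add hgsqint).mono' (hGaesm.inner hgint.aestronglyMeasurable) ?_
    refine Filter.Eventually.of_forall fun ω => ?_
    have h1 := norm_inner_le_norm (𝕜 := ℝ) (gradient J (θ ω)) (g ω)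
    simp only [Pi.add_apply]
    nlinarith [sq_nonneg (‖gradient J (θ ω)‖ - ‖g ω‖), sq_nonneg ‖gradient J (θ ω)‖,
      sq_nonneg ‖g ω‖]
  have hwG : Integrable (fun ω => w ω * ‖gradient J (θ ω)‖ ^ 2) μ := by
    refine hgradsqint.bdd_mul (c := whigh) (hwmeas.mono hF le_rfl).aestronglyMeasurable ?_
    refine Filter.Eventually.of_forall fun ω => ?_
    rw [Real.norm_of_nonneg (hwlow.le.trans (hwbound ω).1)]
    exact (hwbound ω).2
  have hfirst : wlow * ∫ ω, ‖gradient J (θ ω)‖ ^ 2 ∂μ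
      ≤ ∫ ω, inner ℝ (gradient J (θ ω)) (g ω) ∂μ := by
    have h1 : ∫ ω, inner ℝ (gradient J (θ ω)) (g ω) ∂μ
        = ∫ ω, w ω * ‖gradient J (θ ω)‖ ^ 2 ∂μ := by
      rw [integral_inner_eq_integral_inner_condExp hF hGmeas hgint hinner]
      refine integral_congr_ae ?_
      filter_upwards [hcond] with ω hω
      rw [hω, inner_smul_right, real_inner_self_eq_norm_sq]
    rw [h1, ← integral_const_mul]
    exact integral_mono (hgradsqint.const_mul _) hwG fun ω =>
      mul_le_mul_of_nonneg_right (hwbound ω).1 (sq_nonneg _)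
  have hsecond : ∫ ω, ‖g ω‖ ^ 2 ∂μ ≤ whigh * σ ^ 2 := by
    rw [← integral_condExp hF]
    simpa using integral_mono_ae integrable_condExp (integrable_const (whigh * σ ^ 2)) hcondsq
  have hpt : ∀ ω, J (θ ω) + α * inner ℝ (gradient J (θ ω)) (g ω)
      - L * α ^ 2 / 2 * ‖g ω‖ ^ 2 ≤ J (θ ω + α • g ω) := by
    intro ω
    have h := quadratic_lower_bound hJdiff hJsmooth (θ ω) (α • g ω)
    rw [inner_smul_right, norm_smul, Real.norm_of_nonneg hα.le] at h
    linarith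
  have hlin : Integrable (fun ω => J (θ ω) + α * inner ℝ (gradient J (θ ω)) (g ω)) μ :=
    hJθint.add (hinner.const_mul α)
  have hint := integral_mono (hlin.sub (hgsqint.const_mul (L * α ^ 2 / 2))) hJθ'int hpt
  simp only [Pi.sub_apply] at hint
  rw [integral_sub hlin (hgsqint.const_mul _), integral_add hJθint (hinner.const_mul α),
    integral_const_mul, integral_const_mul] at hint
  have h1 := mul_le_mul_of_nonneg_left hfirst hα.le
  have h2 := mul_le_mul_of_nonneg_left hsecond (by positivity : 0 ≤ L * α ^ 2 / 2)
  linarith
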